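/- arXiv:2402.02853 — 2 statements merged into one kernel-verified Lean document; each statement's English description precedes it below -/
import Mathlib

section
/- Let q ≥ 4 be a power of 2, let m ≥ 2 be an integer, n = q^m − 1, and let β be a primitive element of F_{q^m}. Then the cyclic code of length 2n over F_q with generator polynomial (x−1)^2 m_β(x) m_{β^2}(x) has dimension 2(q^m − 1) − 2m − 2 and minimum distance exactly 4; moreover, if qm > 8 then this code is distance-optimal. -/
open Polynomial

/-- The cyclic code of length `N` over the field `F` generated by the polynomial `g`.
Codewords are identified with the representatives of degree `< N` of the elements of the
ideal generated by `g` in `F[x]/(x^N - 1)`; equivalently, a polynomial `c` of degree `< N`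
is a codeword iff `c ∈ (g, x^N - 1)` as an ideal of `F[x]`. -/
noncomputable def cyclicCode (F : Type*) [Field F] (N : ℕ) (g : Polynomial F) :
    Submodule F (Polynomial F) :=
  Polynomial.degreeLT F N ⊓
    Submodule.restrictScalars F (Ideal.span ({g, Polynomial.X ^ N - 1} : Set (Polynomial F)))

/-- The minimum distance (equivalently, the minimum Hamming weight of a nonzero codeword,
a codeword being identified with its coefficient vector) of a linear code of polynomials. -/
noncomputable def minDist {F : Type*} [Field F] (C : Submodule F (Polynomial F)) : ℕ :=
  sInf {w | ∃ c ∈ C, c ≠ 0 ∧ c.support.card = w}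

/-- The minimum Hamming distance of an arbitrary (not necessarily linear) code
`D ⊆ F^N`. -/
noncomputable def setMinDist {F : Type*} {N : ℕ} (D : Set (Fin N → F)) : ℕ :=
  letI := Classical.decEq F
  sInf {w | ∃ u ∈ D, ∃ v ∈ D, u ≠ v ∧ hammingDist u v = w}

/-!
In characteristic two `(x - 1)² = x² - 1`, so for every codeword the coefficients at even exponents
and those at odd exponents each sum to zero, and each parity class contains no or at least two
exponents. The exponents of a word of weight at most three therefore share one parity; as they are
less than `2 n` with `n` odd, they have distinct residues modulo `n`. The word also vanishes at
`1`, `β` and `β²`, so a Vandermonde determinant in these distinct powers of `β` forces it to be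
zero. The codeword `(x² - 1)(xⁿ - 1)` has weight four. Optimality is the Hamming bound: a code of
the same size and distance at least five would have disjoint balls of radius two, which are already
too large when only the words at distance exactly two from the center are counted.
-/

section HammingBound

open Finset

variable {ι α : Type*} [Fintype ι] [Fintype α] [DecidableEq α]

theorem card_filter_ne_eq [DecidableEq ι] (u : ι → α) (s : Finset ι) :
    #{v : ι → α | ({i | u i ≠ v i} : Finset ι) = s} = (Fintype.card α - 1) ^ #s := by
  have h_pi : ({v : ι → α | ({i | u i ≠ v i} : Finset ι) = s} : Finset (ι → α)) =
      Fintype.piFinset fun i => if i ∈ s then {u i}ᶜ else {u i} := by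
    ext v
    simp only [mem_filter_univ, Finset.ext_iff, Fintype.mem_piFinset]
    refine forall_congr' fun i => ?_
    split_ifs with hi <;> simp [hi, eq_comm]
  rw [h_pi, Fintype.card_piFinset]
  simp only [apply_ite card, card_compl, card_singleton, prod_ite_mem, prod_const, univ_inter]

theorem card_filter_hammingDist_eq [DecidableEq ι] (u : ι → α) (w : ℕ) :
    #{v | hammingDist u v = w} = (Fintype.card ι).choose w * (Fintype.card α - 1) ^ w := by
  have h_maps : Set.MapsTo (fun v : ι → α => ({i | u i ≠ v i} : Finset ι))
      (({v | hammingDist u v = w} : Finset (ι → α)) : Set (ι → α))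
      (powersetCard w (univ : Finset ι)) := fun v hv => by
    simpa [hammingDist] using hv
  rw [card_eq_sum_card_fiberwise h_maps, ← card_univ, ← card_powersetCard, ← smul_eq_mul]
  refine sum_eq_card_nsmul fun s hs => ?_
  obtain ⟨-, rfl⟩ := mem_powersetCard.1 hs
  rw [← card_filter_ne_eq u s, filter_filter]
  congr 1
  ext v
  simp only [mem_filter_univ, and_iff_right_iff_imp]
  rintro rfl
  rfl

theorem card_filter_hammingDist_le [DecidableEq ι] (u : ι → α) (r : ℕ) :
    #{v | hammingDist u v ≤ r} =
      ∑ w ∈ range (r + 1), (Fintype.card ι).choose w * (Fintype.card α - 1) ^ w := by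
  have h_maps : Set.MapsTo (hammingDist u)
      (({v | hammingDist u v ≤ r} : Finset (ι → α)) : Set (ι → α)) (range (r + 1)) := fun v hv => by
    simpa [Nat.lt_succ_iff] using hv
  rw [card_eq_sum_card_fiberwise h_maps]
  refine sum_congr rfl fun w hw => ?_
  rw [← card_filter_hammingDist_eq u w, filter_filter]
  congr 1
  ext v
  simp only [mem_filter_univ, and_iff_right_iff_imp]
  rintro rfl
  exact Nat.lt_succ_iff.1 (mem_range.1 hw)

theorem card_mul_sum_choose_le {D : Finset (ι → α)} {r : ℕ}
    (hD : ∀ u ∈ D, ∀ v ∈ D, u ≠ v → 2 * r < hammingDist u v) :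
    #D * ∑ w ∈ range (r + 1), (Fintype.card ι).choose w * (Fintype.card α - 1) ^ w ≤
      Fintype.card α ^ Fintype.card ι := by
  classical
  have h_disjoint : (D : Set (ι → α)).PairwiseDisjoint
      fun u => ({x | hammingDist u x ≤ r} : Finset (ι → α)) := by
    intro u hu v hv huv
    refine disjoint_left.2 fun x hux hvx => ?_
    rw [mem_filter_univ] at hux hvx
    have h_triangle := hammingDist_triangle_right u v x
    have h_far := hD u hu v hv huv
    omega
  calc #D * ∑ w ∈ range (r + 1), (Fintype.card ι).choose w * (Fintype.card α - 1) ^ w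
      = #(D.biUnion fun u => {x | hammingDist u x ≤ r}) := by
        simp only [card_biUnion h_disjoint, card_filter_hammingDist_le, sum_const, smul_eq_mul]
    _ ≤ Fintype.card α ^ Fintype.card ι := by
        simpa only [Fintype.card_fun] using
          card_le_univ (D.biUnion fun u => {x | hammingDist u x ≤ r})

end HammingBound

theorem setMinDist_le_hammingDist {F : Type*} [DecidableEq F] {N : ℕ} {D : Set (Fin N → F)}
    {u v : Fin N → F} (hu : u ∈ D) (hv : v ∈ D) (huv : u ≠ v) :
    setMinDist D ≤ hammingDist u v :=
  Nat.sInf_le ⟨u, hu, v, hv, huv, by congr!⟩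

theorem hamming_bound {F : Type*} [Fintype F] {N r : ℕ} {D : Set (Fin N → F)}
    (hD : 2 * r < setMinDist D) :
    Nat.card D * ∑ w ∈ Finset.range (r + 1), N.choose w * (Fintype.card F - 1) ^ w ≤
      Fintype.card F ^ N := by
  classical
  have h_far : ∀ u ∈ D.toFinset, ∀ v ∈ D.toFinset, u ≠ v → 2 * r < hammingDist u v := by
    simp only [Set.mem_toFinset]
    exact fun u hu v hv huv => hD.trans_le (setMinDist_le_hammingDist hu hv huv)
  simpa only [Fintype.card_fin, Set.toFinset_card, ← Nat.card_eq_fintype_card (α := D)] using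
    card_mul_sum_choose_le h_far

theorem setMinDist_le_of_pow_lt {F : Type*} [Fintype F] [Nonempty F] {N r s : ℕ} (hs : s ≤ N)
    {D : Set (Fin N → F)} (hD : Nat.card D = Fintype.card F ^ (N - s))
    (h : Fintype.card F ^ s < N.choose r * (Fintype.card F - 1) ^ r) :
    setMinDist D ≤ 2 * r := by
  by_contra! h_dist
  have h_bound := hamming_bound h_dist
  rw [hD, ← Nat.sub_add_cancel hs, Nat.add_sub_cancel, pow_add] at h_bound
  have h_ball := Nat.le_of_mul_le_mul_left h_bound (pow_pos Fintype.card_pos _)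
  rw [Nat.sub_add_cancel hs] at h_ball
  refine (h_ball.trans_lt h).not_ge ?_
  exact Finset.single_le_sum (f := fun w => N.choose w * (Fintype.card F - 1) ^ w)
    (fun _ _ => Nat.zero_le _) (Finset.self_mem_range_succ r)

section CyclicCode

variable {F : Type*} [Field F] {N : ℕ} {g : F[X]}

theorem mem_cyclicCode_iff (hg : g ∣ X ^ N - 1) {c : F[X]} :
    c ∈ cyclicCode F N g ↔ c.degree < N ∧ g ∣ c := by
  rw [cyclicCode, Ideal.span_pair_eq_span_left_iff_dvd.2 hg, Submodule.mem_inf, mem_degreeLT,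
    Submodule.restrictScalars_mem, Ideal.mem_span_singleton]

theorem degree_mul_lt_iff (hg : g ≠ 0) {r : F[X]} :
    (g * r).degree < N ↔ r.degree < (N - g.natDegree : ℕ) := by
  rcases eq_or_ne r 0 with rfl | hr
  · simp only [mul_zero, degree_zero, WithBot.bot_lt_natCast]
  · rw [degree_mul, degree_eq_natDegree hg, degree_eq_natDegree hr]
    norm_cast
    omega

theorem cyclicCode_eq_map_mulLeft (hg : g ∣ X ^ N - 1) (hg0 : g ≠ 0) :
    cyclicCode F N g = (degreeLT F (N - g.natDegree)).map (LinearMap.mulLeft F g) := by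
  ext c
  simp only [mem_cyclicCode_iff hg, Submodule.mem_map, mem_degreeLT, LinearMap.mulLeft_apply]
  constructor
  · rintro ⟨hdeg, r, rfl⟩
    exact ⟨r, (degree_mul_lt_iff hg0).1 hdeg, rfl⟩
  · rintro ⟨r, hr, rfl⟩
    exact ⟨(degree_mul_lt_iff hg0).2 hr, dvd_mul_right g r⟩

/-- The encoder of the cyclic code with generator polynomial `g`: the message, read as the
coefficient vector of a polynomial of degree less than `N - deg g`, is multiplied by `g`. -/
noncomputable def cyclicCodeEncoder (hg : g ∣ X ^ N - 1) (hg0 : g ≠ 0) :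
    (Fin (N - g.natDegree) → F) ≃ₗ[F] cyclicCode F N g :=
  (degreeLTEquiv F _).symm ≪≫ₗ
    Submodule.equivMapOfInjective (LinearMap.mulLeft F g) (mul_right_injective₀ hg0) _ ≪≫ₗ
    LinearEquiv.ofEq _ _ (cyclicCode_eq_map_mulLeft hg hg0).symm

theorem finrank_cyclicCode (hg : g ∣ X ^ N - 1) (hg0 : g ≠ 0) :
    Module.finrank F (cyclicCode F N g) = N - g.natDegree := by
  rw [← (cyclicCodeEncoder hg hg0).finrank_eq, Module.finrank_fin_fun]

theorem natCard_cyclicCode (hg : g ∣ X ^ N - 1) (hg0 : g ≠ 0) :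
    Nat.card (cyclicCode F N g) = Nat.card F ^ (N - g.natDegree) := by
  rw [← Nat.card_congr (cyclicCodeEncoder hg hg0).toEquiv, Nat.card_fun, Nat.card_fin]

theorem setMinDist_le_of_natCard_eq [Fintype F] (hg : g ∣ X ^ N - 1) {D : Set (Fin N → F)}
    (hD : Nat.card D = Nat.card (cyclicCode F N g)) {r : ℕ}
    (h : Fintype.card F ^ g.natDegree < N.choose r * (Fintype.card F - 1) ^ r) :
    setMinDist D ≤ 2 * r := by
  have hN : N ≠ 0 := by
    rintro rfl
    rcases r with _ | r
    · exact h.not_ge (by simpa using Nat.one_le_pow _ _ Fintype.card_pos)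
    · simp at h
  have hmonic : (X ^ N - 1 : F[X]).Monic := monic_X_pow_sub_C 1 hN
  have hdeg : g.natDegree ≤ N := by
    simpa only [← C_1, natDegree_X_pow_sub_C] using natDegree_le_of_dvd hg hmonic.ne_zero
  refine setMinDist_le_of_pow_lt hdeg ?_ h
  rw [hD, natCard_cyclicCode hg (ne_zero_of_dvd_ne_zero hmonic.ne_zero hg),
    Nat.card_eq_fintype_card]

theorem minDist_eq_of_forall_le {C : Submodule F F[X]} {c : F[X]} (hc : c ∈ C) (hc0 : c ≠ 0)
    (h_min : ∀ b ∈ C, b ≠ 0 → c.support.card ≤ b.support.card) :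
    minDist C = c.support.card := by
  refine IsLeast.csInf_eq ⟨⟨c, hc, hc0, rfl⟩, ?_⟩
  rintro _ ⟨b, hb, hb0, rfl⟩
  exact h_min b hb hb0

end CyclicCode

section LowWeight

open Finset

theorem eq_zero_of_forall_aeval_pow_eq_zero {R K : Type*} [CommRing R] [CommRing K] [IsDomain K]
    [Algebra R K] [FaithfulSMul R K] {c : R[X]} {β : K}
    (hinj : Set.InjOn (β ^ ·) (c.support : Set ℕ))
    (hroots : ∀ k < #c.support, aeval (β ^ k) c = 0) : c = 0 := by
  let e := c.support.equivFin.symm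
  have hcoeff : (fun j => algebraMap R K (c.coeff (e j))) = 0 := by
    refine Matrix.eq_zero_of_forall_pow_sum_mul_pow_eq_zero
      (f := fun j : Fin #c.support => β ^ (e j : ℕ))
      (fun i j hij => e.injective (Subtype.ext (hinj (e i).2 (e j).2 hij))) fun k => ?_
    calc ∑ j, algebraMap R K (c.coeff (e j)) * (β ^ (e j : ℕ)) ^ (k : ℕ)
        = ∑ i : c.support, algebraMap R K (c.coeff i) * (β ^ (i : ℕ)) ^ (k : ℕ) :=
          e.sum_comp fun i => algebraMap R K (c.coeff i) * (β ^ (i : ℕ)) ^ (k : ℕ)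
      _ = ∑ i ∈ c.support, algebraMap R K (c.coeff i) * (β ^ i) ^ (k : ℕ) :=
          sum_coe_sort c.support fun i => algebraMap R K (c.coeff i) * (β ^ i) ^ (k : ℕ)
      _ = ∑ i ∈ c.support, algebraMap R K (c.coeff i) * (β ^ (k : ℕ)) ^ i :=
          sum_congr rfl fun i _ => by rw [pow_right_comm]
      _ = 0 := by rw [← hroots k k.2, aeval_def, eval₂_eq_sum, sum_def]
  rw [← support_eq_empty, ← not_nonempty_iff_eq_empty]
  rintro ⟨i, hi⟩
  have hi0 := congrFun hcoeff (e.symm ⟨i, hi⟩)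
  simp only [e.apply_symm_apply, Pi.zero_apply, FaithfulSMul.algebraMap_eq_zero_iff] at hi0
  exact mem_support_iff.1 hi hi0

/-- Reduction modulo `X ^ k - 1` is the evaluation at the generator of the group algebra of
`ℤ / k`, whose coefficient at a residue class sums the coefficients of `c` over that class. -/
theorem sum_coeff_modEq_eq_zero {R : Type*} [CommRing R] {k : ℕ} {c : R[X]}
    (hc : X ^ k - 1 ∣ c) (r : ℕ) : ∑ i ∈ c.support with i ≡ r [MOD k], c.coeff i = 0 := by
  have h_aeval : aeval (AddMonoidAlgebra.single (1 : ZMod k) (1 : R)) c = 0 := by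
    obtain ⟨b, rfl⟩ := hc
    simp [AddMonoidAlgebra.single_pow, AddMonoidAlgebra.one_def]
  have h_coeff := congrArg (fun x => x.coeff (r : ZMod k)) h_aeval
  simpa [aeval_def, eval₂_eq_sum, sum_def, AddMonoidAlgebra.single_pow, Finsupp.single_apply,
    sum_filter, ZMod.natCast_eq_natCast_iff] using h_coeff

theorem two_le_card_filter_modEq {R : Type*} [CommRing R] {k : ℕ} {c : R[X]}
    (hc : X ^ k - 1 ∣ c) {r : ℕ} (hr : r ∈ c.support) : 2 ≤ #{i ∈ c.support | i ≡ r [MOD k]} := by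
  have hr_mem : r ∈ c.support.filter (· ≡ r [MOD k]) := mem_filter.2 ⟨hr, rfl⟩
  by_contra! h_card
  have h_single : c.support.filter (· ≡ r [MOD k]) = {r} :=
    eq_singleton_iff_unique_mem.2
      ⟨hr_mem, fun i hi => card_le_one.1 (Nat.lt_succ_iff.1 h_card) i hi r hr_mem⟩
  have h_sum := sum_coeff_modEq_eq_zero hc r
  rw [h_single, sum_singleton] at h_sum
  exact mem_support_iff.1 hr h_sum

theorem modEq_of_card_support_le_three {R : Type*} [CommRing R] {k : ℕ} {c : R[X]}
    (hc : X ^ k - 1 ∣ c) (hw : #c.support ≤ 3) {i j : ℕ} (hi : i ∈ c.support)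
    (hj : j ∈ c.support) : i ≡ j [MOD k] := by
  have h_classes : 2 * #(c.support.image (· % k)) ≤ #c.support := by
    refine mul_card_image_le_card _ _ fun b hb => ?_
    obtain ⟨r, hr, rfl⟩ := mem_image.1 hb
    exact two_le_card_filter_modEq hc hr
  exact card_le_one.1 (by omega : #(c.support.image (· % k)) ≤ 1) _ (mem_image_of_mem _ hi) _
    (mem_image_of_mem _ hj)

theorem injOn_pow_support {R K : Type*} [Semiring R] [CommMonoid K] {k n : ℕ}
    (hkn : k.Coprime n) {β : K} (hβ : IsPrimitiveRoot β n) {c : R[X]}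
    (hdeg : c.degree < (k * n : ℕ)) (hmod : ∀ i ∈ c.support, ∀ j ∈ c.support, i ≡ j [MOD k]) :
    Set.InjOn (β ^ ·) (c.support : Set ℕ) := by
  intro i hi j hj hij
  have h_lt : ∀ l ∈ c.support, l < k * n := fun l hl =>
    Nat.cast_lt.1 ((le_degree_of_mem_supp l hl).trans_lt hdeg)
  have hmod_n : i ≡ j [MOD n] := by
    have hn : n ≠ 0 := by rintro rfl; exact Nat.not_lt_zero i (h_lt i hi)
    rw [hβ.eq_orderOf]
    exact (hβ.isOfFinOrder hn).pow_eq_pow_iff_modEq.1 hij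
  exact ((Nat.modEq_and_modEq_iff_modEq_mul hkn).1 ⟨hmod i hi j hj, hmod_n⟩).eq_of_lt_of_lt
    (h_lt i hi) (h_lt j hj)

theorem eq_zero_of_card_support_le_three {R K : Type*} [CommRing R] [CommRing K] [IsDomain K]
    [Algebra R K] [FaithfulSMul R K] {k n : ℕ} (hkn : k.Coprime n) {β : K}
    (hβ : IsPrimitiveRoot β n) {c : R[X]} (hdeg : c.degree < (k * n : ℕ)) (hc : X ^ k - 1 ∣ c)
    (hβc : aeval β c = 0) (hβc' : aeval (β ^ 2) c = 0) (hw : #c.support ≤ 3) : c = 0 := by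
  refine eq_zero_of_forall_aeval_pow_eq_zero (β := β) ?_ fun j hj => ?_
  · exact injOn_pow_support hkn hβ hdeg fun i hi j hj => modEq_of_card_support_le_three hc hw hi hj
  · have hj3 : j < 3 := hj.trans_le hw
    interval_cases j
    · obtain ⟨b, rfl⟩ := hc
      simp
    · rwa [pow_one]
    · exact hβc'

theorem card_support_mul_X_pow_sub_one {R : Type*} [Ring R] [Nontrivial R] {k n : ℕ} (hk : k ≠ 0)
    (hn : n ≠ 0) (hkn : k ≠ n) : #(((X : R[X]) ^ k - 1) * (X ^ n - 1)).support = 4 := by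
  have h_expand : ((X : R[X]) ^ k - 1) * (X ^ n - 1) =
      ∑ i, C ((![1, -1, -1, 1] : Fin 4 → R) i) * X ^ (![k + n, k, n, 0] : Fin 4 → ℕ) i := by
    simp [Fin.sum_univ_four, pow_add, mul_sub, sub_mul]
    abel
  rw [h_expand]
  refine card_support_eq' _ _ ?_ ?_
  · intro i j hij
    fin_cases i <;> fin_cases j <;> simp at hij ⊢ <;> omega
  · intro i
    fin_cases i <;> simp

end LowWeight

section Minpoly

variable {F K : Type*} [Field F] [Field K] [Algebra F K]

theorem isCoprime_minpoly_of_ne {x y : K} (hx : IsIntegral F x) (hy : IsIntegral F y)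
    (hxy : minpoly F x ≠ minpoly F y) : IsCoprime (minpoly F x) (minpoly F y) := by
  refine (minpoly.irreducible hx).coprime_iff_not_dvd.2 fun hdvd => hxy ?_
  exact (minpoly.eq_of_irreducible_of_monic (minpoly.irreducible hy)
    ((minpoly.dvd_iff).1 hdvd) (minpoly.monic hy)).symm

theorem isIntegral_of_pow_eq_one {x : K} {n : ℕ} (hn : n ≠ 0) (hx : x ^ n = 1) :
    IsIntegral F x :=
  .of_pow hn.bot_lt (hx ▸ isIntegral_one)

theorem minpoly_dvd_X_pow_sub_one {x : K} {n : ℕ} (hx : x ^ n = 1) :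
    minpoly F x ∣ X ^ n - 1 :=
  minpoly.dvd F x (by simp [hx])

theorem minpoly_mul_minpoly_dvd_X_pow_sub_one {x y : K} {n : ℕ} (hn : n ≠ 0) (hx : x ^ n = 1)
    (hy : y ^ n = 1) (hxy : minpoly F x ≠ minpoly F y) :
    minpoly F x * minpoly F y ∣ X ^ n - 1 :=
  (isCoprime_minpoly_of_ne (isIntegral_of_pow_eq_one hn hx) (isIntegral_of_pow_eq_one hn hy)
    hxy).mul_dvd (minpoly_dvd_X_pow_sub_one hx) (minpoly_dvd_X_pow_sub_one hy)

theorem isCoprime_X_pow_sub_one_minpoly {x : K} {k : ℕ} (hx : IsIntegral F x) (hxk : x ^ k ≠ 1) :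
    IsCoprime (X ^ k - 1) (minpoly F x) := by
  refine ((minpoly.irreducible hx).coprime_iff_not_dvd.2 fun hdvd => hxk ?_).symm
  simpa [sub_eq_zero] using minpoly.dvd_iff.1 hdvd

theorem natDegree_X_pow_sub_one_mul_minpoly_mul_minpoly {x y : K} {k : ℕ} (hk : k ≠ 0)
    (hx : IsIntegral F x) (hy : IsIntegral F y) :
    ((X ^ k - 1) * (minpoly F x * minpoly F y)).natDegree =
      k + ((minpoly F x).natDegree + (minpoly F y).natDegree) := by
  have hmonic : (X ^ k - 1 : F[X]).Monic := monic_X_pow_sub_C 1 hk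
  rw [hmonic.natDegree_mul ((minpoly.monic hx).mul (minpoly.monic hy)),
    (minpoly.monic hx).natDegree_mul (minpoly.monic hy), ← C_1, natDegree_X_pow_sub_C]

theorem X_pow_sub_one_mul_minpoly_mul_minpoly_dvd {k n : ℕ} (hkn : k.Coprime n) (hn : 3 ≤ n)
    {β : K} (hβ : IsPrimitiveRoot β n) (hne : minpoly F β ≠ minpoly F (β ^ 2)) :
    (X ^ k - 1) * (minpoly F β * minpoly F (β ^ 2)) ∣ X ^ (k * n) - 1 := by
  have hn0 : n ≠ 0 := by omega
  have hβ2 : (β ^ 2) ^ n = 1 := by rw [pow_right_comm, hβ.pow_eq_one, one_pow]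
  have hβ_pow : β ^ k ≠ 1 := (hβ.pow_of_coprime k hkn).ne_one (by omega)
  have hβ2_pow : (β ^ 2) ^ k ≠ 1 := by
    rw [pow_right_comm]
    exact (hβ.pow_of_coprime k hkn).pow_ne_one_of_pos_of_lt two_ne_zero (by omega)
  refine ((isCoprime_X_pow_sub_one_minpoly (isIntegral_of_pow_eq_one hn0 hβ.pow_eq_one)
    hβ_pow).mul_right (isCoprime_X_pow_sub_one_minpoly (isIntegral_of_pow_eq_one hn0 hβ2)
    hβ2_pow)).mul_dvd (pow_one_sub_dvd_pow_mul_sub_one X k n) ?_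
  exact (minpoly_mul_minpoly_dvd_X_pow_sub_one hn0 hβ.pow_eq_one hβ2 hne).trans
    (mul_comm k n ▸ pow_one_sub_dvd_pow_mul_sub_one X n k)

theorem minDist_cyclicCode_eq_four {k n : ℕ} (hkn : k.Coprime n) (hk : 2 ≤ k) (hn : 3 ≤ n)
    {β : K} (hβ : IsPrimitiveRoot β n) (hne : minpoly F β ≠ minpoly F (β ^ 2)) :
    minDist (cyclicCode F (k * n) ((X ^ k - 1) * (minpoly F β * minpoly F (β ^ 2)))) = 4 := by
  have hdvd := X_pow_sub_one_mul_minpoly_mul_minpoly_dvd hkn hn hβ hne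
  have hβ2 : (β ^ 2) ^ n = 1 := by rw [pow_right_comm, hβ.pow_eq_one, one_pow]
  have h_weight : ((X ^ k - 1 : F[X]) * (X ^ n - 1)).support.card = 4 :=
    card_support_mul_X_pow_sub_one (by omega) (by omega) <| by
      rintro rfl
      rw [Nat.coprime_self] at hkn
      omega
  have h_mem : (X ^ k - 1 : F[X]) * (X ^ n - 1) ∈
      cyclicCode F (k * n) ((X ^ k - 1) * (minpoly F β * minpoly F (β ^ 2))) := by
    refine (mem_cyclicCode_iff hdvd).2 ⟨?_, mul_dvd_mul_left _
      (minpoly_mul_minpoly_dvd_X_pow_sub_one (by omega) hβ.pow_eq_one hβ2 hne)⟩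
    rw [degree_mul, ← C_1, degree_X_pow_sub_C (by omega), degree_X_pow_sub_C (by omega)]
    norm_cast
    nlinarith
  rw [minDist_eq_of_forall_le h_mem (support_nonempty.1 (Finset.card_pos.1 (by omega))), h_weight]
  intro c hc hc0
  obtain ⟨hdeg, hgc⟩ := (mem_cyclicCode_iff hdvd).1 hc
  have h_minpoly : minpoly F β * minpoly F (β ^ 2) ∣ c := dvd_of_mul_left_dvd hgc
  rw [h_weight]
  by_contra! hw
  exact hc0 (eq_zero_of_card_support_le_three hkn hβ hdeg (dvd_of_mul_right_dvd hgc)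
    (minpoly.dvd_iff.1 (dvd_of_mul_right_dvd h_minpoly))
    (minpoly.dvd_iff.1 (dvd_of_mul_left_dvd h_minpoly)) (Nat.lt_succ_iff.1 hw))

end Minpoly

section PrimitiveElement

variable {F K : Type*} [Field F] [Field K] [Algebra F K]

open IntermediateField in
theorem adjoin_eq_top_of_isPrimitiveRoot [Finite K] {γ : K}
    (hγ : IsPrimitiveRoot γ (Nat.card K - 1)) : F⟮γ⟯ = ⊤ := by
  have : Fintype K := Fintype.ofFinite K
  have : NeZero (Nat.card K - 1) := ⟨Nat.sub_ne_zero_of_lt Finite.one_lt_card⟩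
  refine eq_top_iff.2 fun x _ => ?_
  rcases eq_or_ne x 0 with rfl | hx
  · exact zero_mem _
  · have hx_pow : x ^ (Nat.card K - 1) = 1 := by
      rw [Nat.card_eq_fintype_card, FiniteField.pow_card_sub_one_eq_one x hx]
    obtain ⟨i, -, rfl⟩ := hγ.eq_pow_of_pow_eq_one hx_pow
    exact pow_mem (mem_adjoin_simple_self F γ) i

theorem natDegree_minpoly_of_isPrimitiveRoot [Finite K] {γ : K}
    (hγ : IsPrimitiveRoot γ (Nat.card K - 1)) :
    (minpoly F γ).natDegree = Module.finrank F K :=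
  (Field.primitive_element_iff_minpoly_natDegree_eq F γ).1 (adjoin_eq_top_of_isPrimitiveRoot hγ)

theorem pow_pow_finrank_eq_self [FiniteDimensional F K] [IsGalois F K] {β : K} {r : ℕ}
    (h : minpoly F β = minpoly F (β ^ r)) : β ^ r ^ Module.finrank F K = β := by
  obtain ⟨σ, hσ : σ β = β ^ r⟩ := (Normal.minpoly_eq_iff_mem_orbit K).1 h.symm
  have h_iterate : ∀ k : ℕ, (σ ^ k) β = β ^ r ^ k := by
    intro k
    induction k with
    | zero => rw [pow_zero, pow_zero, pow_one, AlgEquiv.one_apply]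
    | succ k ih => rw [pow_succ', AlgEquiv.mul_apply, ih, map_pow, hσ, ← pow_mul, pow_succ']
  have h_order : σ ^ Module.finrank F K = 1 := by
    rw [← IsGalois.card_aut_eq_finrank, pow_card_eq_one']
  rw [← h_iterate, h_order, AlgEquiv.one_apply]

theorem minpoly_ne_minpoly_pow [Finite F] [Finite K] {β : K}
    (hβ : IsPrimitiveRoot β (Nat.card K - 1)) {r : ℕ} (hr : 1 < r) (hrF : r < Nat.card F) :
    minpoly F β ≠ minpoly F (β ^ r) := by
  intro h
  have h_finrank : Module.finrank F K ≠ 0 := Module.finrank_pos.ne'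
  have h_card : r ^ Module.finrank F K < Nat.card K := by
    rw [Module.natCard_eq_pow_finrank (K := F)]
    exact Nat.pow_lt_pow_left hrF h_finrank
  have h_one_lt : 1 < r ^ Module.finrank F K := Nat.one_lt_pow h_finrank hr
  have hβ0 : β ≠ 0 := hβ.ne_zero (by omega)
  have h_pow : β ^ (r ^ Module.finrank F K - 1) = 1 := by
    rw [pow_sub₀ β hβ0 h_one_lt.le, pow_pow_finrank_eq_self h, pow_one, mul_inv_cancel₀ hβ0]
  have h_le := Nat.le_of_dvd (by omega) (hβ.dvd_of_pow_eq_one _ h_pow)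
  omega

theorem coprime_natCard_sub_one (K : Type*) [Field K] [Finite K] (p : ℕ) [CharP K p] :
    p.Coprime (Nat.card K - 1) := by
  have : Fintype K := Fintype.ofFinite K
  have hp : p ∣ Nat.card K := by
    rw [← CharP.cast_eq_zero_iff K, Nat.card_eq_fintype_card, Nat.cast_card_eq_zero]
  exact ((Nat.coprime_self_sub_right Nat.card_pos).2
    (Nat.coprime_one_right _)).coprime_dvd_left hp

theorem natDegree_X_pow_sub_one_mul_minpoly_mul_minpoly_of_isPrimitiveRoot [Finite K] {β : K}
    (hβ : IsPrimitiveRoot β (Nat.card K - 1)) {k r : ℕ} (hk : k ≠ 0)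
    (hr : r.Coprime (Nat.card K - 1)) :
    ((X ^ k - 1) * (minpoly F β * minpoly F (β ^ r))).natDegree =
      2 * Module.finrank F K + k := by
  rw [natDegree_X_pow_sub_one_mul_minpoly_mul_minpoly hk (.of_finite F β) (.of_finite F (β ^ r)),
    natDegree_minpoly_of_isPrimitiveRoot hβ,
    natDegree_minpoly_of_isPrimitiveRoot (hβ.pow_of_coprime r hr), ← two_mul, add_comm]

end PrimitiveElement

theorem succ_sq_mul_sq_lt {q n : ℕ} (h : q = 4 ∧ 63 ≤ n ∨ 8 ≤ q ∧ 7 ≤ n) :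
    (n + 1) ^ 2 * q ^ 2 < (2 * n).choose 2 * (q - 1) ^ 2 := by
  have h_choose : (2 * n).choose 2 = n * (2 * n - 1) := by
    rw [Nat.choose_two_right, mul_assoc, Nat.mul_div_cancel_left _ two_pos]
  rw [h_choose]
  rcases h with ⟨rfl, hn⟩ | ⟨hq, hn⟩
  · obtain ⟨k, rfl⟩ := Nat.exists_eq_add_of_le hn
    rw [show 2 * (63 + k) - 1 = 2 * k + 125 by omega]
    nlinarith
  · obtain ⟨r, rfl⟩ := Nat.exists_eq_add_of_le hq
    obtain ⟨k, rfl⟩ := Nat.exists_eq_add_of_le hn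
    rw [show 2 * (7 + k) - 1 = 2 * k + 13 by omega, show 8 + r - 1 = r + 7 by omega]
    have h_alphabet : 49 * (8 + r) ^ 2 ≤ 64 * (r + 7) ^ 2 := by nlinarith
    have h_length : 64 * (7 + k + 1) ^ 2 < 49 * ((7 + k) * (2 * k + 13)) := by nlinarith
    have h_mul := Nat.mul_lt_mul_of_lt_of_le h_length h_alphabet (by positivity)
    nlinarith

theorem pow_two_mul_add_two_lt {q m : ℕ} (hq2 : ∃ e : ℕ, q = 2 ^ e) (hq4 : 4 ≤ q) (hm : m ≠ 0)
    (hqm : 4 < q ∨ 2 < m) :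
    q ^ (2 * m + 2) < (2 * (q ^ m - 1)).choose 2 * (q - 1) ^ 2 := by
  have h_large : q = 4 ∧ 63 ≤ q ^ m - 1 ∨ 8 ≤ q ∧ 7 ≤ q ^ m - 1 := by
    rcases hq4.eq_or_lt with rfl | hq5
    · have := Nat.pow_le_pow_right (n := 4) (by norm_num) (show 3 ≤ m by omega)
      omega
    · have hq8 : 8 ≤ q := by
        obtain ⟨e, rfl⟩ := hq2
        exact Nat.pow_le_pow_right two_pos
          ((Nat.pow_lt_pow_iff_right (a := 2) (n := 2) Nat.one_lt_two).1 hq5)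
      have := Nat.le_self_pow hm q
      omega
  have h_bound := succ_sq_mul_sq_lt h_large
  rwa [Nat.sub_add_cancel (Nat.one_le_pow _ _ (by omega)), ← pow_mul, ← pow_add,
    Nat.mul_comm m 2] at h_bound

theorem statement6_general {F K : Type*} [Field F] [Fintype F] [Field K] [Fintype K] [Algebra F K]
    (q : ℕ) (hq : Fintype.card F = q) (hq2 : ∃ e : ℕ, q = 2 ^ e) (hq4 : 4 ≤ q)
    (m : ℕ) (hK : Fintype.card K = q ^ m)
    (n : ℕ) (hn : n = q ^ m - 1)
    (β : K) (hβ : IsPrimitiveRoot β (q ^ m - 1)) :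
    Module.finrank F
        (cyclicCode F (2 * n) ((X - 1) ^ 2 * minpoly F β * minpoly F (β ^ 2))) =
      2 * (q ^ m - 1) - 2 * m - 2 ∧
    minDist (cyclicCode F (2 * n) ((X - 1) ^ 2 * minpoly F β * minpoly F (β ^ 2))) = 4 ∧
    (4 < q ∨ 2 < m →
      ∀ D : Set (Fin (2 * n) → F),
        Nat.card D =
            Nat.card (cyclicCode F (2 * n) ((X - 1) ^ 2 * minpoly F β * minpoly F (β ^ 2))) →
          setMinDist D ≤ 4) := by
  have hcardK : Nat.card K - 1 = n := by rw [Nat.card_eq_fintype_card, hK, hn]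
  have hfinrank : Module.finrank F K = m := by
    rw [Module.card_eq_pow_finrank (K := F), hq] at hK
    exact Nat.pow_right_injective (by omega : 2 ≤ q) hK
  have hm : m ≠ 0 := hfinrank ▸ Module.finrank_pos.ne'
  have hqm_le := Nat.le_self_pow hm q
  have : CharP F 2 := charP_of_card_eq_prime_pow (hq.trans hq2.choose_spec)
  have : CharP K 2 := charP_of_injective_algebraMap' F 2
  have hn_odd : Nat.Coprime 2 (Nat.card K - 1) := coprime_natCard_sub_one K 2
  rw [← hn, ← hcardK] at hβ
  have hne : minpoly F β ≠ minpoly F (β ^ 2) :=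
    minpoly_ne_minpoly_pow hβ one_lt_two (by rw [Nat.card_eq_fintype_card]; omega)
  have hgen : (X - 1 : F[X]) ^ 2 * minpoly F β * minpoly F (β ^ 2) =
      (X ^ 2 - 1) * (minpoly F β * minpoly F (β ^ 2)) := by
    rw [sub_pow_char, one_pow, mul_assoc]
  have hdeg := natDegree_X_pow_sub_one_mul_minpoly_mul_minpoly_of_isPrimitiveRoot (F := F) hβ
    two_ne_zero hn_odd
  rw [hfinrank] at hdeg
  rw [hcardK] at hβ hn_odd
  have hdvd := X_pow_sub_one_mul_minpoly_mul_minpoly_dvd hn_odd (by omega) hβ hne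
  rw [hgen]
  refine ⟨by rw [finrank_cyclicCode hdvd (ne_zero_of_natDegree_gt (n := 0) (by omega))]; omega,
    minDist_cyclicCode_eq_four hn_odd le_rfl (by omega) hβ hne,
    fun hqm D hD => setMinDist_le_of_natCard_eq hdvd hD (r := 2) ?_⟩
  rw [hdeg, hq, hn]
  exact pow_two_mul_add_two_lt hq2 hq4 hm hqm

/-- for `q ≥ 4` a power of `2`, `m ≥ 2`, `n = q^m - 1` and `β` a primitive
element of `F_{q^m}`, the repeated-root cyclic code of length `2n` over `F_q` with
generator polynomial `(x-1)^2 m_β(x) m_{β²}(x)` has dimension `2(q^m - 1) - 2m - 2` and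
minimum distance exactly `4`; moreover, if `qm > 8` it is distance-optimal. -/
theorem statement6 {F K : Type*} [Field F] [Fintype F] [Field K] [Fintype K] [Algebra F K]
    (q : ℕ) (hq : Fintype.card F = q) (hq2 : ∃ e : ℕ, q = 2 ^ e) (hq4 : 4 ≤ q)
    (m : ℕ) (hm : 2 ≤ m) (hK : Fintype.card K = q ^ m)
    (n : ℕ) (hn : n = q ^ m - 1)
    (β : K) (hβ : IsPrimitiveRoot β (q ^ m - 1)) :
    Module.finrank F
        (cyclicCode F (2 * n) ((X - 1) ^ 2 * minpoly F β * minpoly F (β ^ 2))) =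
      2 * (q ^ m - 1) - 2 * m - 2 ∧
    minDist (cyclicCode F (2 * n) ((X - 1) ^ 2 * minpoly F β * minpoly F (β ^ 2))) = 4 ∧
    (8 < q * m →
      ∀ D : Set (Fin (2 * n) → F),
        Nat.card D =
            Nat.card (cyclicCode F (2 * n) ((X - 1) ^ 2 * minpoly F β * minpoly F (β ^ 2))) →
          setMinDist D ≤ 4) := by
  obtain ⟨hdim, hdist, hopt⟩ := statement6_general q hq hq2 hq4 m hK n hn β hβ
  exact ⟨hdim, hdist, fun hqm => hopt (by by_contra! h; nlinarith)⟩
end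

section
/- Let m ≥ 8 be an even integer, n = (2^m − 1)/3, and let β be a primitive n-th root of unity in F_{2^m}. Then the cyclic code of length 2n over F_2 with generator polynomial (x−1)^2 m_β(x)^2 m_{β^3}(x) m_{β^5}(x) has dimension 2(2^m − 1)/3 − 4m − 2 and minimum distance exactly 8. -/
open Polynomial

/-!
Write a word of length `2n` as `c = u + Xⁿv` with `deg u, deg v < n`. If `u + v ≠ 0`, then `u + v`
takes the same values as `c` at the `n`-th roots of unity, so it vanishes at the seven consecutive
powers `1, β, …, β⁶` and the BCH bound gives `8 ≤ wt(u + v) ≤ wt(u) + wt(v) = wt(c)`. Otherwise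
`c = (Xⁿ - 1)v`; the double factors `X - 1` and `m_β` make `c'`, hence `v`, vanish at `1, β, β²`,
and `wt(c) = 2 wt(v) ≥ 8`. Conversely, there are more than `2^m` words of length `n` and
weight `2`, so two of them agree modulo `m_β`; `X - 1` and `m_β` divide their difference `w`, so
`(Xⁿ - 1)w` is a codeword of weight at most `8`. Since `5 * 2^(m/2) < n`, the exponents `1, 3, 5`
lie in distinct cyclotomic cosets of full size `m`, which gives the degrees and the coprimality of
the minimal polynomials.
-/

section CyclicCode

variable {F : Type*} [Field F] {N : ℕ} {g : F[X]}

theorem degree_mul_lt_natCast_iff (hg0 : g ≠ 0) (k : F[X]) :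
    (g * k).degree < N ↔ k.degree < (N - g.natDegree : ℕ) := by
  obtain rfl | hk := eq_or_ne k 0
  · simp
  · rw [← natDegree_lt_iff_degree_lt (mul_ne_zero hg0 hk), ← natDegree_lt_iff_degree_lt hk,
      natDegree_mul hg0 hk]
    omega

theorem minDist_eq_of_forall_le_of_exists_le {C : Submodule F F[X]} {d : ℕ}
    (hlower : ∀ c ∈ C, c ≠ 0 → d ≤ c.support.card)
    (hattained : ∃ c ∈ C, c ≠ 0 ∧ c.support.card ≤ d) : minDist C = d := by
  obtain ⟨c, hc, hc0, hcard⟩ := hattained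
  have hmem : d ∈ {w | ∃ c ∈ C, c ≠ 0 ∧ c.support.card = w} :=
    ⟨c, hc, hc0, hcard.antisymm (hlower c hc hc0)⟩
  refine (Nat.sInf_le hmem).antisymm (le_csInf ⟨d, hmem⟩ ?_)
  rintro _ ⟨c, hc, hc0, rfl⟩
  exact hlower c hc hc0

end CyclicCode

section Weight

theorem card_support_add_X_pow_mul {R : Type*} [Semiring R] {n : ℕ} {a : R[X]}
    (ha : a.degree < n) (b : R[X]) :
    (a + X ^ n * b).support.card = a.support.card + b.support.card := by
  have ha' {i : ℕ} (hi : n ≤ i) : a.coeff i = 0 :=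
    coeff_eq_zero_of_degree_lt (ha.trans_le (by exact_mod_cast hi))
  have hsupp : (a + X ^ n * b).support = a.support.disjUnion (b.support.map (addRightEmbedding n))
      (by
        rw [Finset.disjoint_left]
        intro i hi hi'
        obtain ⟨k, -, rfl⟩ := Finset.mem_map.1 hi'
        exact mem_support_iff.1 hi (ha' (Nat.le_add_left n k))) := by
    ext i
    simp only [mem_support_iff, Finset.mem_disjUnion, Finset.mem_map, addRightEmbedding_apply,
      coeff_add, coeff_X_pow_mul']
    obtain hi | hi := lt_or_ge i n
    · have : ∀ k, k + n ≠ i := by omega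
      simp [hi.not_ge, this]
    · obtain ⟨k, rfl⟩ := Nat.exists_eq_add_of_le' hi
      simp [ha' hi]
  rw [hsupp, Finset.card_disjUnion, Finset.card_map]

theorem card_support_X_pow_sub_one_mul {R : Type*} [Ring R] {n : ℕ} {w : R[X]}
    (hw : w.degree < n) : ((X ^ n - 1) * w).support.card = 2 * w.support.card := by
  have hsplit : (X ^ n - 1) * w = -w + X ^ n * w := by noncomm_ring
  rw [hsplit, card_support_add_X_pow_mul (by rwa [degree_neg]), support_neg, two_mul]

theorem exists_eq_add_X_pow_mul {R : Type*} [Ring R] {n k : ℕ} {c : R[X]}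
    (hc : c.degree < (n + k : ℕ)) :
    ∃ a b : R[X], a.degree < n ∧ b.degree < k ∧ c = a + X ^ n * b := by
  nontriviality R
  refine ⟨c %ₘ X ^ n, c /ₘ X ^ n, ?_, ?_, (modByMonic_add_div c (X ^ n)).symm⟩
  · simpa using degree_modByMonic_lt c (monic_X_pow n)
  · obtain h | h := eq_or_ne (c /ₘ X ^ n) 0
    · simp [h]
    · have hc0 : c ≠ 0 := by rintro rfl; simp at h
      rw [← natDegree_lt_iff_degree_lt h, natDegree_divByMonic _ (monic_X_pow n), natDegree_X_pow]
      rw [← natDegree_lt_iff_degree_lt hc0] at hc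
      have : n ≤ c.natDegree := by
        by_contra! hlt
        exact h ((divByMonic_eq_zero_iff (monic_X_pow n)).2
          (by simpa using (natDegree_lt_iff_degree_lt hc0).1 hlt))
      omega

theorem support_sum_X_pow {R : Type*} [Semiring R] [Nontrivial R] (s : Finset ℕ) :
    (∑ e ∈ s, X ^ e : R[X]).support = s := by
  ext i
  simp [coeff_X_pow]

end Weight

section BCH

variable {F K : Type*} [Field F] [Field K] [Algebra F K] {n b δ : ℕ} {β : K}

theorem lt_card_support_of_aeval_pow_eq_zero (hβ : IsPrimitiveRoot β n) {v : F[X]} (hv0 : v ≠ 0)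
    (hdeg : v.degree < n) (hroot : ∀ j < δ, aeval (β ^ (b + j)) v = 0) :
    δ < v.support.card := by
  by_contra! hle
  have hlt {i : ℕ} (hi : i ∈ v.support) : i < n := by
    exact_mod_cast (le_degree_of_mem_supp i hi).trans_lt hdeg
  let e := v.support.equivFin.symm
  have hinj : Function.Injective fun i ↦ β ^ (e i : ℕ) := fun i j hij ↦
    e.injective (Subtype.ext (hβ.pow_inj (hlt (e i).2) (hlt (e j).2) hij))
  -- The Vandermonde matrix on the points `β ^ i`, `i` in the support, kills these scalars.
  have hzero : (fun i ↦ algebraMap F K (v.coeff (e i)) * (β ^ (e i : ℕ)) ^ b) = 0 := by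
    refine Matrix.eq_zero_of_forall_pow_sum_mul_pow_eq_zero hinj fun j ↦ ?_
    rw [← hroot j (j.2.trans_le hle), aeval_def, eval₂_eq_sum, Polynomial.sum_def,
      ← Finset.sum_coe_sort v.support, ← e.sum_comp]
    refine Finset.sum_congr rfl fun i _ ↦ ?_
    ring
  obtain ⟨i, hi⟩ := support_nonempty.2 hv0
  have hβ0 : β ≠ 0 := hβ.ne_zero (by have := hlt hi; omega)
  have hcoeff : v.coeff i = 0 := by simpa [hβ0] using congrFun hzero (e.symm ⟨i, hi⟩)
  exact mem_support_iff.1 hi hcoeff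

end BCH

section Folding

variable {F K : Type*} [Field F] [Field K] [Algebra F K] {n b b' δ ε : ℕ} {β : K}

theorem lt_card_support_add_X_pow_mul (hβ : IsPrimitiveRoot β n) {u v : F[X]}
    (hu : u.degree < n) (hv : v.degree < n) (huv : u + v ≠ 0)
    (hroot : ∀ j < δ, aeval (β ^ (b + j)) (u + X ^ n * v) = 0) :
    δ < (u + X ^ n * v).support.card := by
  have hfold : δ < (u + v).support.card := by
    refine lt_card_support_of_aeval_pow_eq_zero (b := b) hβ huv
      ((degree_add_le u v).trans_lt (max_lt hu hv)) fun j hj ↦ ?_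
    simpa [pow_right_comm _ _ n, hβ.pow_eq_one] using hroot j hj
  rw [card_support_add_X_pow_mul hu]
  exact hfold.trans_le ((Finset.card_le_card support_add).trans (Finset.card_union_le _ _))

theorem two_mul_succ_le_card_support_X_pow_sub_one_mul (hβ : IsPrimitiveRoot β n) {v : F[X]}
    (hv0 : v ≠ 0) (hv : v.degree < n)
    (hroot : ∀ j < ε, aeval (β ^ (b + j)) (derivative ((X ^ n - 1) * v)) = 0) :
    2 * (ε + 1) ≤ ((X ^ n - 1) * v).support.card := by
  have hn : NeZero n := ⟨by rintro rfl; simp [hv0] at hv⟩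
  have hnK : (n : K) ≠ 0 := hβ.neZero'.ne
  have hβ0 : β ≠ 0 := hβ.ne_zero hn.ne
  have hv_root (j : ℕ) (hj : j < ε) : aeval (β ^ (b + j)) v = 0 := by
    simpa [derivative_X_pow, pow_right_comm _ _ n, hβ.pow_eq_one, hnK, hβ0] using hroot j hj
  have hweight : ε < v.support.card := lt_card_support_of_aeval_pow_eq_zero hβ hv0 hv hv_root
  rw [card_support_X_pow_sub_one_mul hv]
  omega

theorem min_le_card_support_of_aeval_pow_eq_zero (hβ : IsPrimitiveRoot β n) {c : F[X]} (hc0 : c ≠ 0)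
    (hdeg : c.degree < (2 * n : ℕ)) (hroot : ∀ j < δ, aeval (β ^ (b + j)) c = 0)
    (hderiv : ∀ j < ε, aeval (β ^ (b' + j)) (derivative c) = 0) :
    min (δ + 1) (2 * (ε + 1)) ≤ c.support.card := by
  obtain ⟨u, v, hu, hv, rfl⟩ := exists_eq_add_X_pow_mul (two_mul n ▸ hdeg)
  obtain huv | huv := eq_or_ne (u + v) 0
  · have hsplit : u + X ^ n * v = (X ^ n - 1) * v := by linear_combination huv
    rw [hsplit] at hc0 hderiv ⊢
    exact (min_le_right _ _).trans
      (two_mul_succ_le_card_support_X_pow_sub_one_mul hβ (right_ne_zero_of_mul hc0) hv hderiv)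
  · exact (min_le_left _ _).trans (lt_card_support_add_X_pow_mul hβ hu hv huv hroot)

end Folding

theorem exists_dvd_card_support_le {F : Type*} [Field F] [Finite F] {g : F[X]} (hg0 : g ≠ 0)
    {n k : ℕ} (hcard : Nat.card F ^ g.natDegree < n.choose k) :
    ∃ w : F[X], w ≠ 0 ∧ w.degree < n ∧ w.support.card ≤ 2 * k ∧ g ∣ w ∧ X - 1 ∣ w := by
  let word (s : Finset ℕ) : F[X] := ∑ e ∈ s, X ^ e
  have hsupp (s : Finset ℕ) : (word s).support = s := support_sum_X_pow s
  have hdeg {s : Finset ℕ} (hs : s ⊆ Finset.range n) : word s ∈ degreeLT F n :=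
    Submodule.sum_mem _ fun e he ↦ mem_degreeLT.2 <| by
      simpa using Finset.mem_range.1 (hs he)
  have := (AdjoinRoot.powerBasis hg0).finite
  have : Finite (AdjoinRoot g) := Module.finite_of_finite F
  have hquot : Nat.card (AdjoinRoot g) = Nat.card F ^ g.natDegree := by
    rw [Module.natCard_eq_pow_finrank (K := F), (AdjoinRoot.powerBasis hg0).finrank,
      AdjoinRoot.powerBasis_dim]
  have := Fintype.ofFinite (AdjoinRoot g)
  obtain ⟨s, hs, t, ht, hne, heq⟩ := Finset.exists_ne_map_eq_of_card_lt_of_maps_to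
    (s := (Finset.range n).powersetCard k) (t := Finset.univ)
    (f := fun s ↦ AdjoinRoot.mk g (word s))
    (by simpa [← Nat.card_eq_fintype_card, hquot]) (fun _ _ ↦ by simp)
  rw [Finset.mem_powersetCard] at hs ht
  refine ⟨word s - word t, ?_, ?_, ?_, AdjoinRoot.mk_eq_mk.1 heq, ?_⟩
  · rw [sub_ne_zero]
    intro h
    exact hne (by rw [← hsupp s, h, hsupp])
  · exact mem_degreeLT.1 (Submodule.sub_mem _ (hdeg hs.1) (hdeg ht.1))
  · calc (word s - word t).support.card ≤ (s ∪ t).card := Finset.card_le_card (by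
          simpa [sub_eq_add_neg, hsupp] using support_add (p := word s) (q := -word t))
      _ ≤ s.card + t.card := Finset.card_union_le s t
      _ = 2 * k := by rw [hs.2, ht.2, two_mul]
  · rw [← C_1, dvd_iff_isRoot]
    simp [word, eval_finsetSum, hs.2, ht.2]

section Conjugates

variable {F K : Type*} [Field F] [Field K] [Algebra F K] {x y : K}

theorem isCoprime_minpoly_of_not_isConjRoot (hx : IsIntegral F x) (hy : IsIntegral F y)
    (h : ¬IsConjRoot F x y) : IsCoprime (minpoly F x) (minpoly F y) := by
  refine (minpoly.irreducible hx).coprime_iff_not_dvd.2 fun hdvd ↦ h ?_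
  exact eq_of_monic_of_associated (minpoly.monic hx) (minpoly.monic hy)
    ((minpoly.irreducible hx).associated_of_dvd (minpoly.irreducible hy) hdvd)

theorem isCoprime_X_sub_one_minpoly (hx : IsIntegral F x) (hx1 : x ≠ 1) :
    IsCoprime (X - 1) (minpoly F x) := by
  have h : ¬IsConjRoot F 1 x := fun h ↦ hx1 <| by
    rwa [← map_one (algebraMap F K), isConjRoot_iff_eq_algebraMap, map_one] at h
  simpa [minpoly.one] using isCoprime_minpoly_of_not_isConjRoot isIntegral_one hx h

variable [Finite F]

theorem natDegree_minpoly_dvd_iff_pow_card_pow_eq (hx : IsIntegral F x) (i : ℕ) :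
    (minpoly F x).natDegree ∣ i ↔ x ^ Nat.card F ^ i = x := by
  rw [(minpoly.irreducible hx).natDegree_dvd_iff_dvd_X_pow_card_pow_sub_X, minpoly.dvd_iff]
  simp [sub_eq_zero]

theorem exists_pow_card_pow_eq_of_isConjRoot (hx : IsIntegral F x) (h : IsConjRoot F x y) :
    ∃ i, x ^ Nat.card F ^ i = y := by
  let E := IntermediateField.adjoin F {x, y}
  have : FiniteDimensional F E := IntermediateField.finiteDimensional_adjoin (by
    rintro z (rfl | rfl)
    exacts [hx, h.isIntegral hx])
  have : Finite E := Module.finite_of_finite F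
  let x' : E := ⟨x, IntermediateField.subset_adjoin F _ (by simp)⟩
  let y' : E := ⟨y, IntermediateField.subset_adjoin F _ (by simp)⟩
  have h' : IsConjRoot F y' x' := (isConjRoot_algHom_iff E.val).1 h.symm
  obtain ⟨σ, hσ⟩ := h'.exists_algEquiv
  obtain ⟨p, _⟩ := CharP.exists F
  have : Fact p.Prime := ⟨CharP.char_is_prime F p⟩
  obtain ⟨i, hi⟩ := FiniteField.exists_forall_apply_eq_pow F p E σ
  exact ⟨i, congrArg E.val ((hi x').symm.trans hσ)⟩

end Conjugates

section Cosets

variable {q m n a b i k : ℕ}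

theorem eq_zero_and_eq_of_mul_pow_modEq (hq : 0 < q) (ha : a * q ^ k < n) (hb : b < n)
    (hqb : ¬q ∣ b) (hi : i ≤ k) (h : a * q ^ i ≡ b [MOD n]) : i = 0 ∧ a = b := by
  have hlt : a * q ^ i < n :=
    (Nat.mul_le_mul_left a (Nat.pow_le_pow_right hq hi)).trans_lt ha
  have heq : a * q ^ i = b := h.eq_of_lt_of_lt hlt hb
  have hi0 : i = 0 := by
    by_contra hi0
    exact hqb (heq ▸ (dvd_pow_self q hi0).mul_left a)
  exact ⟨hi0, by simpa [hi0] using heq⟩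

theorem dvd_and_eq_of_mul_pow_modEq (hm : m ≠ 0) (hq : 0 < q) (hqm : q ^ m ≡ 1 [MOD n])
    (ha : a * q ^ (m / 2) < n) (hb : b * q ^ (m / 2) < n) (hqa : ¬q ∣ a) (hqb : ¬q ∣ b)
    (h : a * q ^ i ≡ b [MOD n]) : m ∣ i ∧ a = b := by
  have hpos : 0 < q ^ (m / 2) := Nat.pow_pos hq
  have ha' : a < n := (Nat.le_mul_of_pos_right a hpos).trans_lt ha
  have hb' : b < n := (Nat.le_mul_of_pos_right b hpos).trans_lt hb
  have hmod : a * q ^ (i % m) ≡ b [MOD n] := by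
    refine .trans (.mul_left a ?_) h
    conv_rhs => rw [← Nat.mod_add_div i m, pow_add, pow_mul]
    simpa using ((hqm.pow (i / m)).mul_left (q ^ (i % m))).symm
  rw [Nat.dvd_iff_mod_eq_zero]
  have hlt := Nat.mod_lt i (Nat.pos_of_ne_zero hm)
  -- A power at most `m / 2` leaves both sides below `n`; otherwise multiply by `q ^ (m - i % m)`.
  obtain hle | hle : i % m ≤ m / 2 ∨ m - i % m ≤ m / 2 := by omega
  · exact eq_zero_and_eq_of_mul_pow_modEq hq ha hb' hqb hle hmod
  · have hback : b * q ^ (m - i % m) ≡ a [MOD n] := by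
      calc b * q ^ (m - i % m)
        _ ≡ a * q ^ (i % m) * q ^ (m - i % m) [MOD n] := hmod.symm.mul_right _
        _ = a * q ^ m := by rw [mul_assoc, ← pow_add, Nat.add_sub_cancel' hlt.le]
        _ ≡ a [MOD n] := by simpa using hqm.mul_left a
    have := (eq_zero_and_eq_of_mul_pow_modEq hq hb ha' hqa hle hback).1
    omega

end Cosets

section PrimitiveRoot

variable {F K : Type*} [Field F] [Field K] [Algebra F K] {m n a b : ℕ} {β : K}

theorem isIntegral_pow_of_isPrimitiveRoot (hβ : IsPrimitiveRoot β n) (hn : n ≠ 0) (k : ℕ) :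
    IsIntegral F (β ^ k) :=
  ((hβ.isIntegral (Nat.pos_of_ne_zero hn)).tower_top).pow k

theorem pow_eq_pow_iff_modEq_of_isPrimitiveRoot {M : Type*} [CommMonoid M] {ζ : M}
    (hζ : IsPrimitiveRoot ζ n) (hn : n ≠ 0) : ζ ^ a = ζ ^ b ↔ a ≡ b [MOD n] := by
  rw [hζ.eq_orderOf]
  exact (hζ.isOfFinOrder hn).pow_eq_pow_iff_modEq

theorem minpoly_pow_dvd_X_pow_sub_one (hβ : IsPrimitiveRoot β n) (a : ℕ) :
    minpoly F (β ^ a) ∣ X ^ n - 1 :=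
  minpoly.dvd F _ (by simp [pow_right_comm _ a, hβ.pow_eq_one])

variable [Finite F]

theorem natDegree_minpoly_pow (hm : m ≠ 0) (hn : Nat.card F ^ m ≡ 1 [MOD n])
    (hβ : IsPrimitiveRoot β n) (ha : a * Nat.card F ^ (m / 2) < n) (hFa : ¬Nat.card F ∣ a) :
    (minpoly F (β ^ a)).natDegree = m := by
  have hint : IsIntegral F (β ^ a) := isIntegral_pow_of_isPrimitiveRoot hβ (by omega) a
  have hfrob (i : ℕ) : (minpoly F (β ^ a)).natDegree ∣ i ↔ a * Nat.card F ^ i ≡ a [MOD n] := by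
    rw [natDegree_minpoly_dvd_iff_pow_card_pow_eq hint, ← pow_mul,
      pow_eq_pow_iff_modEq_of_isPrimitiveRoot hβ (by omega)]
  apply Nat.dvd_antisymm
  · rw [hfrob]
    simpa using hn.mul_left a
  · exact (dvd_and_eq_of_mul_pow_modEq hm Nat.card_pos hn ha ha hFa hFa ((hfrob _).1 dvd_rfl)).1

theorem isCoprime_minpoly_pow (hm : m ≠ 0) (hn : Nat.card F ^ m ≡ 1 [MOD n])
    (hβ : IsPrimitiveRoot β n) (ha : a * Nat.card F ^ (m / 2) < n)
    (hb : b * Nat.card F ^ (m / 2) < n) (hFa : ¬Nat.card F ∣ a) (hFb : ¬Nat.card F ∣ b)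
    (hab : a ≠ b) : IsCoprime (minpoly F (β ^ a)) (minpoly F (β ^ b)) := by
  have hint (k : ℕ) : IsIntegral F (β ^ k) := isIntegral_pow_of_isPrimitiveRoot hβ (by omega) k
  refine isCoprime_minpoly_of_not_isConjRoot (hint a) (hint b) fun hconj ↦ hab ?_
  obtain ⟨i, hi⟩ := exists_pow_card_pow_eq_of_isConjRoot (hint a) hconj
  rw [← pow_mul, pow_eq_pow_iff_modEq_of_isPrimitiveRoot hβ (by omega)] at hi
  exact (dvd_and_eq_of_mul_pow_modEq hm Nat.card_pos hn ha hb hFa hFb hi).2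

theorem X_sub_one_mul_prod_minpoly_pow_dvd_X_pow_sub_one (hm : m ≠ 0)
    (hn : Nat.card F ^ m ≡ 1 [MOD n]) (hβ : IsPrimitiveRoot β n) {s : Finset ℕ}
    (hs : ∀ a ∈ s, a * Nat.card F ^ (m / 2) < n ∧ ¬Nat.card F ∣ a) :
    (X - 1) * ∏ a ∈ s, minpoly F (β ^ a) ∣ X ^ n - 1 := by
  refine IsCoprime.mul_dvd (.prod_right fun a ha ↦ ?_) (sub_one_dvd_pow_sub_one X n)
    (Finset.prod_dvd_of_coprime (fun a ha b hb hab ↦ ?_)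
      fun a _ ↦ minpoly_pow_dvd_X_pow_sub_one hβ a)
  · have han : a < n := (Nat.le_mul_of_pos_right a (Nat.pow_pos Nat.card_pos)).trans_lt (hs a ha).1
    have ha0 : a ≠ 0 := by
      rintro rfl
      exact (hs 0 ha).2 (dvd_zero _)
    exact isCoprime_X_sub_one_minpoly (isIntegral_pow_of_isPrimitiveRoot hβ (by omega) a)
      (hβ.pow_ne_one_of_pos_of_lt ha0 han)
  · exact isCoprime_minpoly_pow hm hn hβ (hs a ha).1 (hs b hb).1 (hs a ha).2 (hs b hb).2 hab

end PrimitiveRoot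

theorem aeval_pow_char_eq_zero {p : ℕ} [Fact p.Prime] {A : Type*} [CommRing A]
    [Algebra (ZMod p) A] {x : A} {f : (ZMod p)[X]} (h : aeval x f = 0) : aeval (x ^ p) f = 0 := by
  rw [← expand_aeval, ZMod.expand_card, map_pow, h, zero_pow (NeZero.ne p)]

section GeneratorPoly

variable {K : Type*} [Field K] [Algebra (ZMod 2) K] {m n : ℕ} {β : K}

/-- The generator polynomial `(x - 1)² m_β(x)² m_{β³}(x) m_{β⁵}(x)` of the repeated-root binary
cyclic code attached to `β`. -/
noncomputable def generatorPoly (β : K) : (ZMod 2)[X] :=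
  (X - 1) ^ 2 * minpoly (ZMod 2) β ^ 2 * minpoly (ZMod 2) (β ^ 3) * minpoly (ZMod 2) (β ^ 5)

theorem generatorPoly_monic (hβ : IsPrimitiveRoot β n) (hn : n ≠ 0) : (generatorPoly β).Monic := by
  have hmonic (a : ℕ) : (minpoly (ZMod 2) (β ^ a)).Monic :=
    minpoly.monic (isIntegral_pow_of_isPrimitiveRoot hβ hn a)
  have hX : (X - 1 : (ZMod 2)[X]).Monic := by simpa using monic_X_sub_C (1 : ZMod 2)
  have h1 : (minpoly (ZMod 2) β).Monic := by simpa using hmonic 1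
  exact (((hX.pow 2).mul (h1.pow 2)).mul (hmonic 3)).mul (hmonic 5)

theorem natDegree_generatorPoly (hm : m ≠ 0) (hmod : 2 ^ m ≡ 1 [MOD n])
    (hlt : 5 * 2 ^ (m / 2) < n) (hβ : IsPrimitiveRoot β n) :
    (generatorPoly β).natDegree = 4 * m + 2 := by
  have hdeg {a : ℕ} (ha : a ≤ 5) (ha2 : ¬2 ∣ a) : (minpoly (ZMod 2) (β ^ a)).natDegree = m :=
    natDegree_minpoly_pow hm (by simpa) hβ
      (by simpa using (Nat.mul_le_mul_right _ ha).trans_lt hlt) (by simpa using ha2)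
  have hX : (X - 1 : (ZMod 2)[X]).natDegree = 1 := by simpa using natDegree_X_sub_C (1 : ZMod 2)
  have h1 : (minpoly (ZMod 2) β).natDegree = m := by simpa using hdeg (a := 1) (by simp) (by simp)
  have h0 : generatorPoly β ≠ 0 := (generatorPoly_monic hβ (by omega)).ne_zero
  rw [generatorPoly] at h0 ⊢
  simp only [mul_ne_zero_iff] at h0
  obtain ⟨⟨⟨hX0, h10⟩, h30⟩, h50⟩ := h0
  rw [natDegree_mul (by simp [*]) h50, natDegree_mul (by simp [*]) h30, natDegree_mul hX0 h10,
    natDegree_pow, natDegree_pow, hX, h1, hdeg (by simp) (by simp), hdeg (by simp) (by simp)]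
  ring

theorem X_sub_one_mul_minpoly_mul_dvd_X_pow_sub_one (hm : m ≠ 0) (hmod : 2 ^ m ≡ 1 [MOD n])
    (hlt : 5 * 2 ^ (m / 2) < n) (hβ : IsPrimitiveRoot β n) :
    (X - 1) * minpoly (ZMod 2) β * (minpoly (ZMod 2) (β ^ 3) * minpoly (ZMod 2) (β ^ 5)) ∣
      X ^ n - 1 := by
  have hexp : ∀ a ∈ ({1, 3, 5} : Finset ℕ), a * 2 ^ (m / 2) < n ∧ ¬2 ∣ a := by
    simp only [Finset.mem_insert, Finset.mem_singleton]
    rintro a (rfl | rfl | rfl) <;> omega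
  simpa [mul_assoc] using
    X_sub_one_mul_prod_minpoly_pow_dvd_X_pow_sub_one (F := ZMod 2) hm (by simpa) hβ (s := {1, 3, 5})
      (by simpa using hexp)

theorem generatorPoly_dvd_X_pow_sub_one_mul (hm : m ≠ 0) (hmod : 2 ^ m ≡ 1 [MOD n])
    (hlt : 5 * 2 ^ (m / 2) < n) (hβ : IsPrimitiveRoot β n) {w : (ZMod 2)[X]}
    (hw : (X - 1) * minpoly (ZMod 2) β ∣ w) : generatorPoly β ∣ (X ^ n - 1) * w := by
  convert! mul_dvd_mul (X_sub_one_mul_minpoly_mul_dvd_X_pow_sub_one hm hmod hlt hβ) hw using 1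
  rw [generatorPoly]
  ring

theorem generatorPoly_dvd_X_pow_two_mul_sub_one (hm : m ≠ 0) (hmod : 2 ^ m ≡ 1 [MOD n])
    (hlt : 5 * 2 ^ (m / 2) < n) (hβ : IsPrimitiveRoot β n) :
    generatorPoly β ∣ X ^ (2 * n) - 1 := by
  have hsq : (X ^ (2 * n) - 1 : (ZMod 2)[X]) = (X ^ n - 1) * (X ^ n - 1) := by
    rw [← sq, sub_pow_char, one_pow, ← pow_mul, mul_comm n]
  rw [hsq]
  exact generatorPoly_dvd_X_pow_sub_one_mul hm hmod hlt hβ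
    (dvd_of_mul_right_dvd (X_sub_one_mul_minpoly_mul_dvd_X_pow_sub_one hm hmod hlt hβ))

variable {c : (ZMod 2)[X]}

theorem aeval_pow_eq_zero_of_X_sub_one_mul_minpoly_dvd (hc : (X - 1) * minpoly (ZMod 2) β ∣ c) :
    ∀ j < 3, aeval (β ^ j) c = 0 := by
  have h0 : aeval (β ^ 0) c = 0 :=
    aeval_eq_zero_of_dvd_aeval_eq_zero (dvd_of_mul_right_dvd hc) (by simp)
  have h1 : aeval (β ^ 1) c = 0 :=
    aeval_eq_zero_of_dvd_aeval_eq_zero (dvd_of_mul_left_dvd hc) (by simp)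
  intro j hj
  interval_cases j
  exacts [h0, h1, pow_mul β 1 2 ▸ aeval_pow_char_eq_zero h1]

theorem sq_dvd_generatorPoly (β : K) :
    ((X - 1) * minpoly (ZMod 2) β) ^ 2 ∣ generatorPoly β := by
  rw [mul_pow]
  exact (dvd_mul_right _ _).mul_right _

theorem aeval_pow_eq_zero_of_generatorPoly_dvd (hc : generatorPoly β ∣ c) :
    ∀ j < 7, aeval (β ^ j) c = 0 := by
  have hlow : ∀ j < 3, aeval (β ^ j) c = 0 := aeval_pow_eq_zero_of_X_sub_one_mul_minpoly_dvd
    ((dvd_pow_self _ two_ne_zero).trans ((sq_dvd_generatorPoly β).trans hc))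
  have h3 : aeval (β ^ 3) c = 0 :=
    minpoly.dvd_iff.1 (((dvd_mul_left _ _).mul_right _).trans hc)
  have h5 : aeval (β ^ 5) c = 0 := minpoly.dvd_iff.1 ((dvd_mul_left _ _).trans hc)
  intro j hj
  obtain hj3 | hj3 := lt_or_ge j 3
  · exact hlow j hj3
  · interval_cases j
    exacts [h3, pow_mul β 2 2 ▸ aeval_pow_char_eq_zero (hlow 2 (by simp)), h5,
      pow_mul β 3 2 ▸ aeval_pow_char_eq_zero h3]

theorem aeval_pow_derivative_eq_zero_of_generatorPoly_dvd (hc : generatorPoly β ∣ c) :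
    ∀ j < 3, aeval (β ^ j) (derivative c) = 0 := by
  apply aeval_pow_eq_zero_of_X_sub_one_mul_minpoly_dvd
  simpa using pow_sub_one_dvd_derivative_of_pow_dvd ((sq_dvd_generatorPoly β).trans hc)

theorem eight_le_card_support_of_generatorPoly_dvd (hβ : IsPrimitiveRoot β n) (hc0 : c ≠ 0)
    (hdeg : c.degree < (2 * n : ℕ)) (hc : generatorPoly β ∣ c) : 8 ≤ c.support.card :=
  min_le_card_support_of_aeval_pow_eq_zero (δ := 7) (ε := 3) (b := 0) (b' := 0) hβ hc0 hdeg
    (by simpa using aeval_pow_eq_zero_of_generatorPoly_dvd hc)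
    (by simpa using aeval_pow_derivative_eq_zero_of_generatorPoly_dvd hc)

theorem two_pow_lt_choose_two (hlt : 5 * 2 ^ (m / 2) < n) : 2 ^ m < n.choose 2 := by
  have hm2 : 2 ^ m ≤ 2 * (2 ^ (m / 2) * 2 ^ (m / 2)) := by
    rw [← pow_add, ← pow_succ']
    exact Nat.pow_le_pow_right two_pos (by omega)
  have hn : n * (n - 1) = 2 * n.choose 2 := by
    rw [Nat.choose_two_right, Nat.mul_div_cancel' (Nat.even_mul_pred_self n).two_dvd]
  nlinarith [Nat.mul_le_mul hlt.le (Nat.le_sub_one_of_lt hlt), Nat.pow_pos (n := m / 2) two_pos]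

theorem exists_generatorPoly_dvd_card_support_le (hm : m ≠ 0) (hmod : 2 ^ m ≡ 1 [MOD n])
    (hlt : 5 * 2 ^ (m / 2) < n) (hβ : IsPrimitiveRoot β n) :
    ∃ c : (ZMod 2)[X],
      c ≠ 0 ∧ c.degree < (2 * n : ℕ) ∧ c.support.card ≤ 8 ∧ generatorPoly β ∣ c := by
  have hpos : 0 < 2 ^ (m / 2) := by positivity
  have hint (a : ℕ) : IsIntegral (ZMod 2) (β ^ a) :=
    isIntegral_pow_of_isPrimitiveRoot hβ (by omega) a
  have hdegβ : (minpoly (ZMod 2) (β ^ 1)).natDegree = m :=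
    natDegree_minpoly_pow hm (by simpa) hβ (by rw [Nat.card_zmod]; omega) (by simp)
  obtain ⟨w, hw0, hdeg, hcard, hβw, hXw⟩ :=
    exists_dvd_card_support_le (n := n) (k := 2) (minpoly.ne_zero (hint 1))
      (by simpa only [hdegβ, Nat.card_zmod] using two_pow_lt_choose_two hlt)
  have hXn : (X ^ n - 1 : (ZMod 2)[X]) ≠ 0 := by
    simpa using X_pow_sub_C_ne_zero (by omega : 0 < n) (1 : ZMod 2)
  have hdegXn : (X ^ n - 1 : (ZMod 2)[X]).natDegree = n := by
    simpa using natDegree_X_pow_sub_C (n := n) (r := (1 : ZMod 2))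
  refine ⟨(X ^ n - 1) * w, mul_ne_zero hXn hw0, ?_, ?_,
    generatorPoly_dvd_X_pow_sub_one_mul hm hmod hlt hβ ?_⟩
  · rw [degree_mul_lt_natCast_iff hXn]
    simpa [hdegXn, two_mul] using hdeg
  · rw [card_support_X_pow_sub_one_mul hdeg]
    omega
  · have hcop := isCoprime_X_sub_one_minpoly (hint 1)
      (hβ.pow_ne_one_of_pos_of_lt one_ne_zero (by omega))
    simpa using hcop.mul_dvd hXw hβw

end GeneratorPoly

theorem five_mul_two_pow_lt_of_even {m : ℕ} (hm : 8 ≤ m) (hme : Even m) :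
    5 * 2 ^ (m / 2) < (2 ^ m - 1) / 3 := by
  obtain ⟨r, rfl⟩ := hme
  rw [← two_mul, Nat.mul_div_cancel_left r two_pos, two_mul, pow_add]
  have hr : 2 ^ 4 ≤ 2 ^ r := Nat.pow_le_pow_right two_pos (by omega)
  rw [Nat.lt_div_iff_mul_lt three_pos]
  have := Nat.mul_le_mul_right (2 ^ r) hr
  omega

theorem three_dvd_two_pow_sub_one_of_even {m : ℕ} (hme : Even m) : 3 ∣ 2 ^ m - 1 := by
  obtain ⟨r, rfl⟩ := hme
  rw [← two_mul, pow_mul]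
  exact Nat.sub_one_dvd_pow_sub_one (2 ^ 2) r

theorem two_pow_modEq_one_of_even {m : ℕ} (hme : Even m) :
    2 ^ m ≡ 1 [MOD (2 ^ m - 1) / 3] :=
  (Nat.modEq_sub Nat.one_le_two_pow).of_dvd
    (Nat.div_dvd_of_dvd (three_dvd_two_pow_sub_one_of_even hme))

theorem statement12_general {K : Type*} [Field K] [Algebra (ZMod 2) K] {m n : ℕ} (hm : m ≠ 0)
    (hmod : 2 ^ m ≡ 1 [MOD n]) (hlt : 5 * 2 ^ (m / 2) < n) {β : K} (hβ : IsPrimitiveRoot β n) :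
    Module.finrank (ZMod 2) (cyclicCode (ZMod 2) (2 * n) (generatorPoly β)) = 2 * n - 4 * m - 2 ∧
      minDist (cyclicCode (ZMod 2) (2 * n) (generatorPoly β)) = 8 := by
  have hdvd := generatorPoly_dvd_X_pow_two_mul_sub_one hm hmod hlt hβ
  constructor
  · rw [finrank_cyclicCode hdvd (generatorPoly_monic hβ (by omega)).ne_zero,
      natDegree_generatorPoly hm hmod hlt hβ, Nat.sub_add_eq]
  · refine minDist_eq_of_forall_le_of_exists_le (fun c hc hc0 ↦ ?_) ?_
    · obtain ⟨hdeg, hgc⟩ := (mem_cyclicCode_iff hdvd).1 hc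
      exact eight_le_card_support_of_generatorPoly_dvd hβ hc0 hdeg hgc
    · obtain ⟨c, hc0, hdeg, hcard, hgc⟩ := exists_generatorPoly_dvd_card_support_le hm hmod hlt hβ
      exact ⟨c, (mem_cyclicCode_iff hdvd).2 ⟨hdeg, hgc⟩, hc0, hcard⟩

/-- for even `m ≥ 8`, `n = (2^m - 1)/3` and `β` a primitive `n`-th root of
unity in `F_{2^m}`, the repeated-root binary cyclic code of length `2n` with generator
polynomial `(x-1)^2 m_β(x)^2 m_{β³}(x) m_{β⁵}(x)` has dimension `2(2^m - 1)/3 - 4m - 2`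
and minimum distance exactly `8`. -/
theorem statement12 {K : Type*} [Field K] [Fintype K] [Algebra (ZMod 2) K]
    (m : ℕ) (hm : 8 ≤ m) (hme : Even m) (hK : Fintype.card K = 2 ^ m)
    (n : ℕ) (hn : n = (2 ^ m - 1) / 3)
    (β : K) (hβ : IsPrimitiveRoot β n) :
    Module.finrank (ZMod 2)
        (cyclicCode (ZMod 2) (2 * n)
          ((X - 1) ^ 2 * (minpoly (ZMod 2) β) ^ 2 * minpoly (ZMod 2) (β ^ 3) *
            minpoly (ZMod 2) (β ^ 5))) =
      2 * (2 ^ m - 1) / 3 - 4 * m - 2 ∧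
    minDist (cyclicCode (ZMod 2) (2 * n)
        ((X - 1) ^ 2 * (minpoly (ZMod 2) β) ^ 2 * minpoly (ZMod 2) (β ^ 3) *
          minpoly (ZMod 2) (β ^ 5))) = 8 := by
  rw [Nat.mul_div_assoc 2 (three_dvd_two_pow_sub_one_of_even hme), ← hn]
  exact statement12_general (by omega) (hn ▸ two_pow_modEq_one_of_even hme)
    (hn ▸ five_mul_two_pow_lt_of_even hm hme) hβ
end
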